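/- arXiv:2209.00532 — 3 statements merged into one kernel-verified Lean document; each statement's English description precedes it below -/
import Mathlib

section
/- Let γ ∈ [0,1], m > 0, and let r, q, q′, Q, Q′ ∈ ℝ satisfy the Bellman equation Q = r + γ·Q′, with TD error δ = r + γ·q′ − q. Let v, v′ ∈ ℝⁿ with ‖v‖ ≥ m and ‖v′‖ ≥ m, and define the approximate policy gradients g = q·v, g′ = q′·v′ and the true policy gradients g_true = Q·v, g′_true = Q′·v′ at the current and next state-action pairs. Then max(‖g − g_true‖, ‖g′ − g′_true‖) ≥ m·|δ|/(1 + γ); that is, the divergence of the approximate from the true policy gradient at the current or the subsequent transition is bounded below by a positive multiple of the absolute TD error. -/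
/-!
The true Q-values have zero TD error, so the TD error of the approximate ones is a combination of
the two approximation errors, `δ = γ * (q' - Q') - (q - Q)`. One of these errors therefore has norm
at least `‖δ‖ / (1 + ‖γ‖)`, and passing to gradients multiplies it by `‖v‖ ≥ m` or `‖v'‖ ≥ m`.
-/

/-- The temporal-difference error of the values `q` at the current and `q'` at the next
state-action pair, for a transition with reward `r` and discount factor `γ`. The Bellman equation
says that it vanishes at the true Q-values. -/
def tdError {R : Type*} [Ring R] (r γ q q' : R) : R :=
  r + γ * q' - q

theorem tdError_eq_of_bellman {R : Type*} [Ring R] {r γ Q Q' : R} (hBellman : Q = r + γ * Q')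
    (q q' : R) : tdError r γ q q' = γ * (q' - Q') - (q - Q) := by
  rw [tdError, hBellman]
  noncomm_ring

section SeminormedRing

variable {𝕜 : Type*} [SeminormedRing 𝕜] {r γ Q Q' : 𝕜}

theorem norm_tdError_le_of_bellman (hBellman : Q = r + γ * Q') (q q' : 𝕜) :
    ‖tdError r γ q q'‖ ≤ ‖γ‖ * ‖q' - Q'‖ + ‖q - Q‖ :=
  calc ‖tdError r γ q q'‖ = ‖γ * (q' - Q') - (q - Q)‖ := by
        rw [tdError_eq_of_bellman hBellman]
    _ ≤ ‖γ * (q' - Q')‖ + ‖q - Q‖ := norm_sub_le _ _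
    _ ≤ ‖γ‖ * ‖q' - Q'‖ + ‖q - Q‖ := by gcongr; exact norm_mul_le _ _

theorem norm_tdError_div_le_max_of_bellman (hBellman : Q = r + γ * Q') (q q' : 𝕜) :
    ‖tdError r γ q q'‖ / (1 + ‖γ‖) ≤ max ‖q - Q‖ ‖q' - Q'‖ := by
  rw [div_le_iff₀ (by positivity)]
  calc ‖tdError r γ q q'‖ ≤ ‖γ‖ * ‖q' - Q'‖ + ‖q - Q‖ := norm_tdError_le_of_bellman hBellman q q'
    _ ≤ ‖γ‖ * max ‖q - Q‖ ‖q' - Q'‖ + max ‖q - Q‖ ‖q' - Q'‖ := by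
        gcongr
        · exact le_max_right _ _
        · exact le_max_left _ _
    _ = max ‖q - Q‖ ‖q' - Q'‖ * (1 + ‖γ‖) := by ring

variable {E F : Type*} [SeminormedAddCommGroup E] [Module 𝕜 E] [NormSMulClass 𝕜 E]
  [SeminormedAddCommGroup F] [Module 𝕜 F] [NormSMulClass 𝕜 F] {m : ℝ}

theorem mul_norm_sub_le_norm_smul_sub_smul {v : E} (hv : m ≤ ‖v‖) (a b : 𝕜) :
    m * ‖a - b‖ ≤ ‖a • v - b • v‖ := by
  rw [← sub_smul, norm_smul, mul_comm]
  gcongr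

theorem policy_gradient_divergence_lower_bound_general (hm : 0 ≤ m) (hBellman : Q = r + γ * Q')
    (q q' : 𝕜) {v : E} {v' : F} (hv : m ≤ ‖v‖) (hv' : m ≤ ‖v'‖) :
    m * ‖tdError r γ q q'‖ / (1 + ‖γ‖) ≤ max ‖q • v - Q • v‖ ‖q' • v' - Q' • v'‖ :=
  calc m * ‖tdError r γ q q'‖ / (1 + ‖γ‖) = m * (‖tdError r γ q q'‖ / (1 + ‖γ‖)) :=
        mul_div_assoc _ _ _
    _ ≤ m * max ‖q - Q‖ ‖q' - Q'‖ := by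
        gcongr
        exact norm_tdError_div_le_max_of_bellman hBellman q q'
    _ = max (m * ‖q - Q‖) (m * ‖q' - Q'‖) := mul_max_of_nonneg _ _ hm
    _ ≤ max ‖q • v - Q • v‖ ‖q' • v' - Q' • v'‖ :=
        max_le_max (mul_norm_sub_le_norm_smul_sub_smul hv q Q)
          (mul_norm_sub_le_norm_smul_sub_smul hv' q' Q')

end SeminormedRing

/-- The divergence of the approximate from the true policy gradient at the
current or the subsequent transition is bounded below by a positive multiple
of the absolute TD error. -/
theorem policy_gradient_divergence_lower_bound (n : ℕ) (γ m : ℝ)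
    (hγ0 : 0 ≤ γ) (hγ1 : γ ≤ 1) (hm : 0 < m)
    (r q q' Q Q' δ : ℝ)
    (hBellman : Q = r + γ * Q') (hδ : δ = r + γ * q' - q)
    (v v' : EuclideanSpace ℝ (Fin n)) (hv : m ≤ ‖v‖) (hv' : m ≤ ‖v'‖) :
    max ‖q • v - Q • v‖ ‖q' • v' - Q' • v'‖ ≥ m * |δ| / (1 + γ) := by
  simpa only [tdError, ← hδ, Real.norm_eq_abs, abs_of_nonneg hγ0] using
    policy_gradient_divergence_lower_bound_general hm.le hBellman q q' hv hv'
end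

section
/- Let N be a positive natural number, let δ : Fin N → ℝ with δ i ≠ 0 for all i, let α, β, ρ ∈ ℝ, set S = ∑ⱼ |δ j|^α, p i = |δ i|^α / S, and w i = (N · p i)^(−β). Then the expected gradient of the loss L(δ) = |δ|^ρ/ρ under prioritized sampling with importance weights satisfies ∑ᵢ p i · w i · sign(δ i) · |δ i|^(ρ−1) = N^(−β) · S^(β−1) · ∑ᵢ sign(δ i) · |δ i|^(ρ−1+α−αβ). In particular, if ρ + α − αβ = 2, this equals N^(−β) · S^(β−1) · ∑ᵢ δ i, a positive multiple of the uniformly sampled expected MSE gradient (1/N) ∑ᵢ δ i, so the PER objective is unbiased exactly when the exponent condition ρ + α − αβ = 2 holds. -/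
/-! Sampling a transition with probability `p` and weighting it by `(N p)^(-β)` rescales its
gradient by `N^(-β) p^(1-β)`. Since `p` is proportional to `|δ|^α`, this shifts the exponent of
`|δ|` in the gradient by `α (1 - β)`, and the MSE gradient `δ = sign δ * |δ|` is recovered when the
resulting exponent is `1`. -/

theorem sign_mul_abs_self (x : ℝ) : Real.sign x * |x| = x := by
  rcases lt_trichotomy x 0 with hx | rfl | hx
  · rw [Real.sign_of_neg hx, abs_of_neg hx, neg_one_mul, neg_neg]
  · rw [Real.sign_zero, zero_mul]
  · rw [Real.sign_of_pos hx, abs_of_pos hx, one_mul]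

theorem mul_mul_rpow_neg {c p : ℝ} (hc : 0 ≤ c) (hp : 0 < p) (β : ℝ) :
    p * (c * p) ^ (-β) = c ^ (-β) * p ^ (1 - β) := by
  rw [Real.mul_rpow hc hp.le, sub_eq_add_neg, Real.rpow_add hp, Real.rpow_one, mul_left_comm]

theorem prioritized_gradient_eq {c S x : ℝ} (hc : 0 ≤ c) (hS : 0 < S) (hx : x ≠ 0) (α β ρ : ℝ) :
    |x| ^ α / S * (c * (|x| ^ α / S)) ^ (-β) * (Real.sign x * |x| ^ (ρ - 1))
      = c ^ (-β) * S ^ (β - 1) * (Real.sign x * |x| ^ (ρ - 1 + α - α * β)) := by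
  have hx_abs : 0 < |x| := abs_pos.mpr hx
  have hprob : 0 < |x| ^ α / S := div_pos (Real.rpow_pos_of_pos hx_abs α) hS
  have hprob_rpow : (|x| ^ α / S) ^ (1 - β) = S ^ (β - 1) * |x| ^ (α * (1 - β)) := by
    rw [Real.div_rpow (Real.rpow_nonneg hx_abs.le α) hS.le, ← Real.rpow_mul hx_abs.le,
      ← neg_sub 1 β, Real.rpow_neg hS.le, div_eq_inv_mul]
  have hexponent : |x| ^ (ρ - 1 + α - α * β) = |x| ^ (α * (1 - β)) * |x| ^ (ρ - 1) := by
    rw [← Real.rpow_add hx_abs]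
    ring_nf
  rw [mul_mul_rpow_neg hc hprob, hprob_rpow, hexponent]
  ring

theorem sum_abs_rpow_pos {ι : Type*} [Fintype ι] {δ : ι → ℝ} {i : ι} (hi : δ i ≠ 0) (α : ℝ) :
    0 < ∑ j, |δ j| ^ α :=
  Finset.sum_pos' (fun j _ ↦ Real.rpow_nonneg (abs_nonneg (δ j)) α)
    ⟨i, Finset.mem_univ i, Real.rpow_pos_of_pos (abs_pos.mpr hi) α⟩

/-- `c = N` gives the usual weights; `c = 1 / min p` gives, for `0 ≤ β`, the weights divided by
their maximum. -/
theorem per_expected_gradient_general {ι : Type*} [Fintype ι] {c : ℝ} (hc : 0 ≤ c)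
    (δ : ι → ℝ) (α β ρ : ℝ)
    (S : ℝ) (hS : S = ∑ j, |δ j| ^ α)
    (p : ι → ℝ) (hp : ∀ i, p i = |δ i| ^ α / S)
    (w : ι → ℝ) (hw : ∀ i, w i = (c * p i) ^ (-β)) :
    (∑ i, p i * w i * (Real.sign (δ i) * |δ i| ^ (ρ - 1))
        = c ^ (-β) * S ^ (β - 1) * ∑ i, Real.sign (δ i) * |δ i| ^ (ρ - 1 + α - α * β)) ∧
      (ρ + α - α * β = 2 →
        ∑ i, p i * w i * (Real.sign (δ i) * |δ i| ^ (ρ - 1))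
          = c ^ (-β) * S ^ (β - 1) * ∑ i, δ i) := by
  have hgradient : ∑ i, p i * w i * (Real.sign (δ i) * |δ i| ^ (ρ - 1))
      = c ^ (-β) * S ^ (β - 1) * ∑ i, Real.sign (δ i) * |δ i| ^ (ρ - 1 + α - α * β) := by
    rw [Finset.mul_sum]
    refine Finset.sum_congr rfl fun i _ ↦ ?_
    rcases eq_or_ne (δ i) 0 with hi | hi
    · -- `sign 0 = 0` kills both sides, so the junk values of `0 ^ (-β)` and `0 / 0` are harmless.
      simp only [hi, Real.sign_zero, zero_mul, mul_zero]
    · rw [hw, hp]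
      exact prioritized_gradient_eq hc (hS ▸ sum_abs_rpow_pos hi α) hi α β ρ
  refine ⟨hgradient, fun hexponent ↦ ?_⟩
  have hone : ρ - 1 + α - α * β = 1 := by linarith
  simpa only [hone, Real.rpow_one, sign_mul_abs_self] using hgradient

/-- The expected gradient of the loss `|δ|^ρ/ρ` under PER prioritized sampling
with importance weights equals `N^(−β) * S^(β−1)` times the sum of
`sign(δ i) * |δ i|^(ρ−1+α−αβ)`; in particular, when `ρ + α − αβ = 2` it is a
positive multiple of the uniformly sampled expected MSE gradient, i.e. the PER
objective is unbiased exactly under this exponent condition. -/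
theorem per_expected_gradient (N : ℕ) (hN : 0 < N)
    (δ : Fin N → ℝ) (hδ : ∀ i, δ i ≠ 0) (α β ρ : ℝ)
    (S : ℝ) (hS : S = ∑ j, |δ j| ^ α)
    (p : Fin N → ℝ) (hp : ∀ i, p i = |δ i| ^ α / S)
    (w : Fin N → ℝ) (hw : ∀ i, w i = ((N : ℝ) * p i) ^ (-β)) :
    (∑ i, p i * w i * (Real.sign (δ i) * |δ i| ^ (ρ - 1))
        = (N : ℝ) ^ (-β) * S ^ (β - 1)
            * ∑ i, Real.sign (δ i) * |δ i| ^ (ρ - 1 + α - α * β)) ∧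
      (ρ + α - α * β = 2 →
        ∑ i, p i * w i * (Real.sign (δ i) * |δ i| ^ (ρ - 1))
          = (N : ℝ) ^ (-β) * S ^ (β - 1) * ∑ i, δ i) :=
  per_expected_gradient_general N.cast_nonneg δ α β ρ S hS p hp w hw
end

section
/- Let N be a positive natural number, α > 0, and δ : Fin N → ℝ. Set Mᵢ = max(|δ i|^α, 1), S = ∑ⱼ Mⱼ, LAP sampling probabilities p i = Mᵢ/S, and PAL normalizer ξ = S/N. Define the Huber gradient (κ = 1) by h(d) = d if |d| ≤ 1 and h(d) = sign(d) otherwise, and the PAL gradient by g(d) = (1/ξ)·d if |d| ≤ 1 and g(d) = (1/ξ)·sign(d)·|d|^α otherwise. Then the expected Huber gradient under LAP prioritized sampling equals the expected PAL gradient under uniform sampling: ∑ᵢ p i · h(δ i) = (1/N) · ∑ᵢ g(δ i). -/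
/-- The priority `max (|d| ^ α) 1` of a transition with TD error `d`; LAP samples proportionally
to it. -/
noncomputable def lapPriority (α d : ℝ) : ℝ :=
  max (|d| ^ α) 1

/-- The derivative of the Huber loss with threshold `κ = 1`, the loss LAP minimizes. -/
noncomputable def huberGrad (d : ℝ) : ℝ :=
  if |d| ≤ 1 then d else Real.sign d

/-- The derivative of the PAL loss with exponent `α`. The normalizer `ξ`, which in the paper is the
mean priority of the buffer, is a free parameter treated as constant in `d`. -/
noncomputable def palGrad (α ξ d : ℝ) : ℝ :=
  if |d| ≤ 1 then (1 / ξ) * d else (1 / ξ) * Real.sign d * |d| ^ α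

theorem lapPriority_of_abs_le_one {α d : ℝ} (hα : 0 ≤ α) (hd : |d| ≤ 1) : lapPriority α d = 1 :=
  max_eq_right (Real.rpow_le_one (abs_nonneg d) hd hα)

theorem lapPriority_of_one_le_abs {α d : ℝ} (hα : 0 ≤ α) (hd : 1 ≤ |d|) :
    lapPriority α d = |d| ^ α :=
  max_eq_left (Real.one_le_rpow hd hα)

theorem palGrad_eq_lapPriority_mul_huberGrad {α : ℝ} (hα : 0 ≤ α) (ξ d : ℝ) :
    palGrad α ξ d = (1 / ξ) * (lapPriority α d * huberGrad d) := by
  rcases le_or_gt |d| 1 with hd | hd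
  · rw [palGrad, huberGrad, if_pos hd, if_pos hd, lapPriority_of_abs_le_one hα hd, one_mul]
  · rw [palGrad, huberGrad, if_neg hd.not_ge, if_neg hd.not_ge,
      lapPriority_of_one_le_abs hα hd.le, mul_assoc, mul_comm (Real.sign d)]

/-- For `S = ∑ i ∈ s, w i` and `n = #s`, this trades sampling in proportion to the weights `w` for
uniform sampling, with `w` absorbed into the integrand. -/
theorem sum_div_mul_eq_one_div_mul_sum {ι K : Type*} [Semifield K] (s : Finset ι) (w f : ι → K)
    (S : K) {n : K} (hn : n ≠ 0) :
    ∑ i ∈ s, w i / S * f i = (1 / n) * ∑ i ∈ s, (1 / (S / n)) * (w i * f i) := by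
  have normalizer : (1 / n) * (1 / (S / n)) = 1 / S := by
    rw [one_div_div, one_div_mul_eq_div, div_right_comm, div_self hn]
  rw [← Finset.mul_sum, ← mul_assoc, normalizer, Finset.mul_sum]
  exact Finset.sum_congr rfl fun i _ => by rw [← mul_assoc, one_div_mul_eq_div]

theorem lap_pal_same_expected_gradient_general {ι : Type*} {s : Finset ι} (hs : s.Nonempty)
    {α : ℝ} (hα : 0 ≤ α) (δ : ι → ℝ) :
    ∑ i ∈ s, lapPriority α (δ i) / (∑ j ∈ s, lapPriority α (δ j)) * huberGrad (δ i)
      = (1 / s.card) * ∑ i ∈ s, palGrad α ((∑ j ∈ s, lapPriority α (δ j)) / s.card) (δ i) := by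
  simp only [palGrad_eq_lapPriority_mul_huberGrad hα]
  exact sum_div_mul_eq_one_div_mul_sum s _ _ _ (Nat.cast_ne_zero.mpr hs.card_ne_zero)

/-- The expected Huber gradient (κ = 1) under LAP prioritized sampling equals
the expected PAL gradient under uniform sampling. -/
theorem lap_pal_same_expected_gradient (N : ℕ) (hN : 0 < N) (α : ℝ) (hα : 0 < α)
    (δ : Fin N → ℝ)
    (S : ℝ) (hS : S = ∑ j, max (|δ j| ^ α) 1)
    (p : Fin N → ℝ) (hp : ∀ i, p i = max (|δ i| ^ α) 1 / S)
    (ξ : ℝ) (hξ : ξ = S / N) :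
    ∑ i, p i * (if |δ i| ≤ 1 then δ i else Real.sign (δ i))
      = (1 / N) * ∑ i, (if |δ i| ≤ 1 then (1 / ξ) * δ i
          else (1 / ξ) * Real.sign (δ i) * |δ i| ^ α) := by
  have : NeZero N := ⟨hN.ne'⟩
  simpa only [hp, hξ, hS, lapPriority, huberGrad, palGrad, Finset.card_fin] using
    lap_pal_same_expected_gradient_general Finset.univ_nonempty hα.le δ
end
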